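/- Let m ≥ 2, p₁, …, p_m ∈ (1, ∞) with 1/p₁ + ⋯ + 1/p_m ≥ 1, and suppose there is an index i₀ ∈ {2, …, m} such that 1/p_{i₀−1} + ⋯ + 1/p_m ≥ 1 and 1/p_{i₀} + ⋯ + 1/p_m < 1. Then for every bounded nonnegative m-linear form A : ℓ_{p₁} × ⋯ × ℓ_{p_m} → 𝕂 one has sup_{j₁, …, j_{i₀−1}} ( Σ_{j_{i₀}=1}^∞ ( ⋯ ( Σ_{j_m=1}^∞ A(e_{j₁}, …, e_{j_m})^{δ^{p_m}} )^{δ^{p_{m−1},p_m}/δ^{p_m}} ⋯ )^{δ^{p_{i₀},…,p_m}/δ^{p_{i₀+1},…,p_m}} )^{1/δ^{p_{i₀},…,p_m}} ≤ ‖A‖. -/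

import Mathlib

open scoped ENNReal

noncomputable section

/-- The mixed (anisotropic) iterated `ℓ`-norm: for exponents `q 0, …, q (k-1)` and a
nonnegative function `f` of `k` natural indices,
`mixedNorm q f = (Σ_{j₀} (Σ_{j₁} ⋯ (Σ_{j_{k-1}} f(j)^{q_{k-1}})^{q_{k-2}/q_{k-1}} ⋯ )^{q₀/q₁})^{1/q₀}`,
the sums being taken innermost over the last index. -/
noncomputable def mixedNorm : {k : ℕ} → (Fin k → ℝ) → ((Fin k → ℕ) → ℝ≥0∞) → ℝ≥0∞
  | 0, _, f => f (fun i => i.elim0)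
  | (_ + 1), q, f =>
      (∑' j : ℕ, (mixedNorm (fun i => q i.succ) (fun t => f (Fin.cons j t))) ^ (q 0))
        ^ (1 / q 0)

/-! The proof is by induction on the number of variables. Contracting the first variable of `A`
against `w = ∑ x_j e_j` with `x ≥ 0` gives a nonnegative form of norm at most `‖A‖ ‖w‖_{p₁}`, to
which the induction hypothesis applies. Mixed norms with decreasing exponents, all at most `r`, are
superadditive after raising to the power `r`, so this bounds `‖(x_j b_j)‖_r` by `‖A‖ ‖x‖_{p₁}`,
where `r = δ^{p₂,…,p_m}` and `b_j` is the mixed norm of the slice `j₁ = j`. Since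
`1/p₁ + 1/δ^{p₁,…,p_m} = 1/r`, the converse of Hölder's inequality yields
`‖b‖_{δ^{p₁,…,p_m}} ≤ ‖A‖`. The variables before `i₀` are eliminated by evaluating `A` at unit
vectors. -/

open scoped NNReal

section ConverseHolder

variable {ι : Type*}

lemma sum_rpow_le_rpow_sum_of_one_le (F : Finset ι) (a : ι → ℝ≥0∞) {r : ℝ} (hr : 1 ≤ r) :
    ∑ j ∈ F, a j ^ r ≤ (∑ j ∈ F, a j) ^ r := by
  classical
  induction F using Finset.induction_on with
  | empty => simp
  | insert j F hj ih =>
    rw [Finset.sum_insert hj, Finset.sum_insert hj]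
    exact (add_le_add_right ih _).trans (ENNReal.add_rpow_le_rpow_add _ _ hr)

variable {p q r : ℝ}

lemma rpow_one_div_le_of_rpow_one_div_le_mul (h : p.HolderTriple q r) {S C : ℝ≥0∞} (hS : S ≠ ⊤)
    (hSC : S ^ (1 / r) ≤ C * S ^ (1 / p)) : S ^ (1 / q) ≤ C := by
  rcases eq_or_ne S 0 with rfl | hS0
  · simp [h.symm.pos]
  have hq : 1 / q = 1 / r - 1 / p := by
    simp only [one_div, ← h.inv_add_inv_eq_inv, add_sub_cancel_left]
  rw [hq, ENNReal.rpow_sub _ _ hS0 hS]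
  exact ENNReal.div_le_of_le_mul hSC

lemma rpow_div_mul_self_rpow (h : p.HolderTriple q r) (b : ℝ≥0∞) :
    (b ^ (q / p) * b) ^ r = b ^ q := by
  have hp := h.pos
  have hq := h.symm.pos
  have hr := h.pos'
  have hexp : (q / p + 1) * r = q := by
    have := h.inv_add_inv_eq_inv
    field_simp at this ⊢
    linarith
  nth_rw 2 [← ENNReal.rpow_one b]
  rw [← ENNReal.rpow_add_of_nonneg _ _ (by positivity) zero_le_one, ← ENNReal.rpow_mul, hexp]

theorem tsum_rpow_le_of_forall_sum_mul_rpow_le (h : p.HolderTriple q r) {b : ι → ℝ≥0∞} {C : ℝ≥0∞}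
    (hb : ∀ (F : Finset ι) (x : ι → ℝ≥0),
      (∑ j ∈ F, (x j * b j) ^ r) ^ (1 / r) ≤ C * (∑ j ∈ F, (x j : ℝ≥0∞) ^ p) ^ (1 / p)) :
    (∑' j, b j ^ q) ^ (1 / q) ≤ C := by
  have hp := h.pos
  have hq := h.symm.pos
  have hr := h.pos'
  rcases eq_or_ne C ⊤ with rfl | hC
  · exact le_top
  have hb_ne_top (j : ι) : b j ≠ ⊤ := by
    refine ne_top_of_le_ne_top hC ?_
    simpa [← ENNReal.rpow_mul, hr.ne'] using hb {j} 1
  rw [one_div, ENNReal.rpow_inv_le_iff hq, ENNReal.tsum_eq_iSup_sum]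
  refine iSup_le fun F => ?_
  rw [← ENNReal.rpow_inv_le_iff hq, ← one_div]
  have hS : ∑ j ∈ F, b j ^ q ≠ ⊤ :=
    (ENNReal.sum_lt_top.2 fun j _ => ENNReal.rpow_lt_top_of_nonneg hq.le (hb_ne_top j)).ne
  -- The equality case of Hölder's inequality dictates the weights `x j = b j ^ (q / p)`.
  have hx (j : ι) : (((b j).toNNReal ^ (q / p) : ℝ≥0) : ℝ≥0∞) = b j ^ (q / p) := by
    rw [ENNReal.coe_rpow_of_nonneg _ (by positivity), ENNReal.coe_toNNReal (hb_ne_top j)]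
  have htest := hb F fun j => (b j).toNNReal ^ (q / p)
  simp only [hx, rpow_div_mul_self_rpow h, ← ENNReal.rpow_mul, div_mul_cancel₀ _ hp.ne'] at htest
  exact rpow_one_div_le_of_rpow_one_div_le_mul h hS htest

end ConverseHolder

section MixedNorm

variable {k : ℕ}

lemma mixedNorm_const_mul {q : Fin k → ℝ} (hq : ∀ i, 0 < q i) (c : ℝ≥0∞)
    (f : (Fin k → ℕ) → ℝ≥0∞) :
    mixedNorm q (fun t => c * f t) = c * mixedNorm q f := by
  induction k with
  | zero => rfl
  | succ k ih =>
    have hq₀ := hq 0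
    simp only [mixedNorm, ih fun i => hq i.succ, ENNReal.mul_rpow_of_nonneg _ _ hq₀.le,
      ENNReal.tsum_mul_left]
    rw [ENNReal.mul_rpow_of_nonneg _ _ (by positivity), ← ENNReal.rpow_mul,
      mul_one_div_cancel hq₀.ne', ENNReal.rpow_one]

theorem sum_mixedNorm_rpow_le {ι : Type*} {q : Fin k → ℝ} (hq : Antitone q)
    (hq_one : ∀ i, 1 ≤ q i) {r : ℝ} (hr : 1 ≤ r) (hqr : ∀ i, q i ≤ r) (F : Finset ι)
    (f : ι → (Fin k → ℕ) → ℝ≥0∞) :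
    ∑ j ∈ F, mixedNorm q (f j) ^ r ≤ mixedNorm q (fun t => ∑ j ∈ F, f j t) ^ r := by
  induction k generalizing r with
  | zero => exact sum_rpow_le_rpow_sum_of_one_le F _ hr
  | succ k ih =>
    have hq₀ : 0 < q 0 := one_pos.trans_le (hq_one 0)
    have hrq : 1 ≤ r / q 0 := (one_le_div hq₀).2 (hqr 0)
    simp only [mixedNorm, ← ENNReal.rpow_mul, one_div_mul_eq_div]
    refine (sum_rpow_le_rpow_sum_of_one_le F _ hrq).trans
      (ENNReal.rpow_le_rpow ?_ (zero_le_one.trans hrq))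
    rw [← Summable.tsum_finsetSum fun _ _ => ENNReal.summable]
    exact ENNReal.tsum_le_tsum fun n =>
      ih (hq.comp_monotone Fin.strictMono_succ.monotone) (fun i => hq_one i.succ) (hq_one 0)
        (fun i => hq (Fin.zero_le _)) _

end MixedNorm

section TailExponent

variable {k : ℕ}

/-- The sum of the reciprocals of the `p l` with `a ≤ l`, where `l` counts from `0`. -/
def tailInvSum (p : Fin k → ℝ) (a : ℕ) : ℝ :=
  ∑ l ∈ Finset.univ.filter (fun l : Fin k => a ≤ (l : ℕ)), 1 / p l

/-- The exponent `δ^{p_{a+1}, …, p_k}` of the paper; the shift by one is due to `Fin k` counting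
from `0`. It has a junk value unless `tailInvSum p a < 1`. -/
def tailExponent (p : Fin k → ℝ) (a : ℕ) : ℝ :=
  1 / (1 - tailInvSum p a)

lemma tailInvSum_succ (p : Fin (k + 1) → ℝ) (a : ℕ) :
    tailInvSum p (a + 1) = tailInvSum (fun i => p i.succ) a := by
  simp [tailInvSum, Finset.sum_filter, Fin.sum_univ_succ]

lemma tailInvSum_zero (p : Fin (k + 1) → ℝ) :
    tailInvSum p 0 = 1 / p 0 + tailInvSum p 1 := by
  simp [tailInvSum, Finset.sum_filter, Fin.sum_univ_succ]

lemma tailExponent_succ (p : Fin (k + 1) → ℝ) (a : ℕ) :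
    tailExponent p (a + 1) = tailExponent (fun i => p i.succ) a := by
  rw [tailExponent, tailInvSum_succ, tailExponent]

variable {p : Fin k → ℝ}

lemma tailInvSum_nonneg (hp : ∀ i, 0 ≤ p i) (a : ℕ) : 0 ≤ tailInvSum p a :=
  Finset.sum_nonneg fun i _ => one_div_nonneg.2 (hp i)

lemma tailInvSum_antitone (hp : ∀ i, 0 ≤ p i) : Antitone (tailInvSum p) := fun _ _ hab =>
  Finset.sum_le_sum_of_subset_of_nonneg (Finset.monotone_filter_right _ fun _ _ => hab.trans)
    fun i _ _ => one_div_nonneg.2 (hp i)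

lemma tailExponent_antitone (hp : ∀ i, 0 ≤ p i) (hsum : tailInvSum p 0 < 1) :
    Antitone (tailExponent p) := fun a _ hab =>
  one_div_le_one_div_of_le
    (sub_pos.2 ((tailInvSum_antitone hp a.zero_le).trans_lt hsum))
    (sub_le_sub_left (tailInvSum_antitone hp hab) 1)

lemma one_le_tailExponent (hp : ∀ i, 0 ≤ p i) (hsum : tailInvSum p 0 < 1) (a : ℕ) :
    1 ≤ tailExponent p a :=
  (one_le_div (sub_pos.2 ((tailInvSum_antitone hp a.zero_le).trans_lt hsum))).2
    (sub_le_self 1 (tailInvSum_nonneg hp a))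

lemma holderTriple_tailExponent {p : Fin (k + 1) → ℝ} (hp₀ : 0 < p 0)
    (hsum : tailInvSum p 0 < 1) :
    (p 0).HolderTriple (tailExponent p 0) (tailExponent p 1) where
  inv_add_inv_eq_inv := by
    simp only [tailExponent, tailInvSum_zero, one_div, inv_inv]
    ring
  left_pos := hp₀
  right_pos := one_div_pos.2 (sub_pos.2 hsum)

end TailExponent

section MultilinearForm

lemma enorm_sum_lp_single {ι : Type*} [DecidableEq ι] {E : ι → Type*}
    [∀ i, NormedAddCommGroup (E i)] {p : ℝ≥0∞} [Fact (1 ≤ p)] (hp : p ≠ ⊤) (F : Finset ι)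
    (f : ∀ i, E i) :
    ‖∑ i ∈ F, lp.single p i (f i)‖ₑ = (∑ i ∈ F, ‖f i‖ₑ ^ p.toReal) ^ (1 / p.toReal) := by
  have hp₀ : 0 < p.toReal := ENNReal.toReal_pos (one_pos.trans_le Fact.out).ne' hp
  have hnorm := congrArg ENNReal.ofReal (lp.norm_sum_single hp₀ f F)
  rw [ENNReal.ofReal_sum_of_nonneg fun i _ => by positivity] at hnorm
  simp only [← ENNReal.ofReal_rpow_of_nonneg (norm_nonneg _) hp₀.le, ofReal_norm] at hnorm
  rw [← hnorm, ← ENNReal.rpow_mul, mul_one_div_cancel hp₀.ne', ENNReal.rpow_one]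

variable {𝕂 : Type*} [RCLike 𝕂] {k : ℕ}

/-- Bounded multilinear forms on `ℓ_{p₁} × ⋯ × ℓ_{p_k}`, normed by the operator norm. The exponents
are real, hence finite, as in `mixedNorm`. -/
abbrev LpForm (𝕂 : Type*) [RCLike 𝕂] (p : Fin k → ℝ) [∀ i, Fact (1 ≤ ENNReal.ofReal (p i))] :
    Type _ :=
  ContinuousMultilinearMap 𝕂 (fun i : Fin k => lp (fun _ : ℕ => 𝕂) (ENNReal.ofReal (p i))) 𝕂

/-- The coefficient `A(e_{j₁}, …, e_{j_k})` of a multilinear form on sequence spaces. -/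
def formCoeff {p : Fin k → ℝ} [∀ i, Fact (1 ≤ ENNReal.ofReal (p i))] (A : LpForm 𝕂 p)
    (j : Fin k → ℕ) : 𝕂 :=
  A fun i => lp.single (ENNReal.ofReal (p i)) (j i) 1

variable {p : Fin (k + 1) → ℝ} [∀ i, Fact (1 ≤ ENNReal.ofReal (p i))] (A : LpForm 𝕂 p)

lemma formCoeff_cons (n : ℕ) (t : Fin k → ℕ) :
    formCoeff A (Fin.cons n t) = formCoeff (A.curryLeft (lp.single _ n 1)) t := by
  rw [formCoeff, formCoeff, ContinuousMultilinearMap.curryLeft_apply]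
  congr 1
  ext1 i
  cases i using Fin.cases <;> rfl

lemma formCoeff_curryLeft_sum_single (F : Finset ℕ) (x : ℕ → 𝕂) (t : Fin k → ℕ) :
    formCoeff (A.curryLeft (∑ n ∈ F, lp.single _ n (x n))) t =
      ∑ n ∈ F, x n * formCoeff A (Fin.cons n t) := by
  have hsingle (n : ℕ) : lp.single (E := fun _ : ℕ => 𝕂) (ENNReal.ofReal (p 0)) n (x n) =
      x n • lp.single _ n 1 := by
    rw [← lp.single_smul, smul_eq_mul, mul_one]
  simp only [hsingle, map_sum, map_smul, formCoeff_cons]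
  simp [formCoeff]

lemma enorm_curryLeft_sum_single_le (F : Finset ℕ) (x : ℕ → 𝕂) :
    ‖A.curryLeft (∑ n ∈ F, lp.single _ n (x n))‖ₑ ≤
      ‖A‖ₑ * (∑ n ∈ F, ‖x n‖ₑ ^ p 0) ^ (1 / p 0) := by
  have hp₀ : 1 ≤ p 0 := ENNReal.one_le_ofReal.1 Fact.out
  have hA : ‖A.curryLeft‖ₑ = ‖A‖ₑ := by
    rw [← ofReal_norm, A.curryLeft_norm, ofReal_norm]
  have hw := enorm_sum_lp_single (p := ENNReal.ofReal (p 0)) ENNReal.ofReal_ne_top F x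
  rw [ENNReal.toReal_ofReal (zero_le_one.trans hp₀)] at hw
  exact hA ▸ hw ▸ A.curryLeft.le_opENorm _

lemma re_formCoeff_curryLeft_sum_single (F : Finset ℕ) (x : ℕ → ℝ) (t : Fin k → ℕ) :
    RCLike.re (formCoeff (A.curryLeft (∑ n ∈ F, lp.single _ n (x n : 𝕂))) t) =
      ∑ n ∈ F, x n * RCLike.re (formCoeff A (Fin.cons n t)) := by
  rw [formCoeff_curryLeft_sum_single, map_sum]
  simp only [RCLike.re_ofReal_mul]

end MultilinearForm

section MixedInequality

variable {𝕂 : Type*} [RCLike 𝕂]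

lemma sum_mul_mixedNorm_slice_le {k : ℕ} {p : Fin (k + 1) → ℝ}
    [∀ i, Fact (1 ≤ ENNReal.ofReal (p i))] {A : LpForm 𝕂 p}
    (hA : ∀ j, 0 ≤ RCLike.re (formCoeff A j)) {q : Fin k → ℝ} (hq : Antitone q)
    (hq_one : ∀ i, 1 ≤ q i) {r : ℝ} (hr : 1 ≤ r) (hqr : ∀ i, q i ≤ r)
    (hcurry : ∀ w, (∀ t, 0 ≤ RCLike.re (formCoeff (A.curryLeft w) t)) →
      mixedNorm q (fun t => ENNReal.ofReal (RCLike.re (formCoeff (A.curryLeft w) t))) ≤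
        ‖A.curryLeft w‖ₑ)
    (F : Finset ℕ) (x : ℕ → ℝ≥0) :
    (∑ n ∈ F, (x n * mixedNorm q fun t =>
        ENNReal.ofReal (RCLike.re (formCoeff A (Fin.cons n t)))) ^ r) ^ (1 / r) ≤
      ‖A‖ₑ * (∑ n ∈ F, (x n : ℝ≥0∞) ^ p 0) ^ (1 / p 0) := by
  have hr₀ : 0 < r := one_pos.trans_le hr
  let w : lp (fun _ : ℕ => 𝕂) (ENNReal.ofReal (p 0)) :=
    ∑ n ∈ F, lp.single _ n ((x n : ℝ) : 𝕂)
  have hterm (t : Fin k → ℕ) : ∀ n ∈ F, 0 ≤ (x n : ℝ) * RCLike.re (formCoeff A (Fin.cons n t)) :=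
    fun n _ => mul_nonneg (x n).coe_nonneg (hA _)
  have hw_nonneg (t : Fin k → ℕ) : 0 ≤ RCLike.re (formCoeff (A.curryLeft w) t) :=
    re_formCoeff_curryLeft_sum_single A F (fun n => x n) t ▸ Finset.sum_nonneg (hterm t)
  have hw_coeff (t : Fin k → ℕ) : ENNReal.ofReal (RCLike.re (formCoeff (A.curryLeft w) t)) =
      ∑ n ∈ F, x n * ENNReal.ofReal (RCLike.re (formCoeff A (Fin.cons n t))) := by
    rw [re_formCoeff_curryLeft_sum_single, ENNReal.ofReal_sum_of_nonneg (hterm t)]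
    simp only [ENNReal.ofReal_mul (x _).coe_nonneg, ENNReal.ofReal_coe_nnreal]
  calc
    _ ≤ (mixedNorm q (fun t => ENNReal.ofReal (RCLike.re (formCoeff (A.curryLeft w) t))) ^ r) ^
          (1 / r) := by
      simp only [hw_coeff, ← mixedNorm_const_mul fun i => one_pos.trans_le (hq_one i)]
      exact ENNReal.rpow_le_rpow (sum_mixedNorm_rpow_le hq hq_one hr hqr F _) (by positivity)
    _ = mixedNorm q (fun t => ENNReal.ofReal (RCLike.re (formCoeff (A.curryLeft w) t))) := by
      rw [← ENNReal.rpow_mul, mul_one_div_cancel hr₀.ne', ENNReal.rpow_one]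
    _ ≤ ‖A.curryLeft w‖ₑ := hcurry w hw_nonneg
    _ ≤ _ := by
      simpa [w, enorm] using enorm_curryLeft_sum_single_le A F fun n => ((x n : ℝ) : 𝕂)

theorem mixedNorm_formCoeff_le_enorm {k : ℕ} {p : Fin k → ℝ}
    [∀ i, Fact (1 ≤ ENNReal.ofReal (p i))] (hsum : tailInvSum p 0 < 1) (A : LpForm 𝕂 p)
    (hA : ∀ j, 0 ≤ RCLike.re (formCoeff A j)) :
    mixedNorm (fun s => tailExponent p s) (fun j => ENNReal.ofReal (RCLike.re (formCoeff A j))) ≤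
      ‖A‖ₑ := by
  induction k with
  | zero =>
    rw [mixedNorm, ← ofReal_norm]
    refine ENNReal.ofReal_le_ofReal ((RCLike.re_le_norm _).trans ?_)
    simpa [formCoeff] using A.le_opNorm fun i => lp.single _ (i.elim0 : ℕ) 1
  | succ k ih =>
    have hp (i) : 1 ≤ p i := ENNReal.one_le_ofReal.1 Fact.out
    have hp₀ (i) : 0 ≤ p i := zero_le_one.trans (hp i)
    have hanti := tailExponent_antitone hp₀ hsum
    have hsum_tail : tailInvSum (fun i => p i.succ) 0 < 1 :=
      tailInvSum_succ p 0 ▸ (tailInvSum_antitone hp₀ zero_le_one).trans_lt hsum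
    refine tsum_rpow_le_of_forall_sum_mul_rpow_le
      (holderTriple_tailExponent (one_pos.trans_le (hp 0)) hsum)
      (sum_mul_mixedNorm_slice_le hA (fun i j hij => hanti (Fin.succ_le_succ_iff.2 hij))
        (fun i => one_le_tailExponent hp₀ hsum _) (one_le_tailExponent hp₀ hsum 1)
        (fun i => hanti (by simp)) fun w hw => ?_)
    simpa only [Fin.val_succ, tailExponent_succ] using ih hsum_tail (A.curryLeft w) hw

/-- The multi-index whose first `M` entries are `t` and whose remaining entries are `s`. Unlike
`Fin.append`, it does not tie its length `m` to the form `M + k`. -/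
def joinIndices {M k m : ℕ} (hm : M + k = m) (t : Fin M → ℕ) (s : Fin k → ℕ) (i : Fin m) : ℕ :=
  if h : (i : ℕ) < M then t ⟨i, h⟩ else s ⟨i - M, by omega⟩

lemma joinIndices_succ {M k n : ℕ} (hn : M + k = n) (t : Fin (M + 1) → ℕ) (s : Fin k → ℕ) :
    joinIndices (show M + 1 + k = n + 1 by omega) t s =
      Fin.cons (t 0) (joinIndices hn (fun i => t i.succ) s) := by
  ext i
  cases i using Fin.cases <;> simp [joinIndices]

theorem mixed_inequality_large_exponent_sum_general {M k m : ℕ} (hm : M + k = m) {p : Fin m → ℝ}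
    [∀ i, Fact (1 ≤ ENNReal.ofReal (p i))] (hsum : tailInvSum p M < 1) (A : LpForm 𝕂 p)
    (hA : ∀ j, 0 ≤ RCLike.re (formCoeff A j)) :
    ⨆ t : Fin M → ℕ, mixedNorm (fun s : Fin k => tailExponent p (M + s))
      (fun s => ENNReal.ofReal (RCLike.re (formCoeff A (joinIndices hm t s)))) ≤
      ENNReal.ofReal ‖A‖ := by
  rw [ofReal_norm]
  refine iSup_le fun t => ?_
  induction M generalizing m with
  | zero =>
    obtain rfl : k = m := by omega
    have hjoin (s : Fin k → ℕ) : joinIndices hm t s = s := by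
      ext i
      simp [joinIndices]
    simpa only [hjoin, zero_add] using mixedNorm_formCoeff_le_enorm hsum A hA
  | succ M ih =>
    obtain ⟨n, rfl⟩ : ∃ n, m = n + 1 := ⟨M + k, by omega⟩
    have hn : M + k = n := by omega
    let e₀ : lp (fun _ : ℕ => 𝕂) (ENNReal.ofReal (p 0)) := lp.single _ (t 0) 1
    have hnorm : ‖A.curryLeft e₀‖ₑ ≤ ‖A‖ₑ := by
      simpa [e₀] using enorm_curryLeft_sum_single_le A {t 0} 1
    have hcurry := ih hn (tailInvSum_succ p M ▸ hsum) (A.curryLeft e₀)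
      (fun j => formCoeff_cons A (t 0) j ▸ hA _) fun i => t i.succ
    simpa only [joinIndices_succ hn, formCoeff_cons, Nat.add_right_comm M 1, tailExponent_succ]
      using hcurry.trans hnorm

end MixedInequality

/-- **The mixed inequality in the case `1/p₁ + ⋯ + 1/p_m ≥ 1`.**
Let `m ≥ 2` and `p₁, …, p_m ∈ (1, ∞)` (indexed here by `Fin m`, so that the paper's
`p_i` is `p ⟨i-1⟩`) with `1/p₁ + ⋯ + 1/p_m ≥ 1`, and suppose `i₀ ∈ {2, …, m}` is such
that `1/p_{i₀-1} + ⋯ + 1/p_m ≥ 1` and `1/p_{i₀} + ⋯ + 1/p_m < 1`.  Then for every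
bounded nonnegative `m`-linear form `A : ℓ_{p₁} × ⋯ × ℓ_{p_m} → 𝕂` one has
`sup_{j₁,…,j_{i₀-1}} (Σ_{j_{i₀}} ( ⋯ (Σ_{j_m} A(e_{j₁},…,e_{j_m})^{δ^{p_m}})^{δ^{p_{m-1},p_m}/δ^{p_m}} ⋯ )^{δ^{p_{i₀},…,p_m}/δ^{p_{i₀+1},…,p_m}})^{1/δ^{p_{i₀},…,p_m}} ≤ ‖A‖`,
where `δ^{p_k,…,p_m} = 1/(1 − (1/p_k + ⋯ + 1/p_m))`. -/
theorem mixed_inequality_large_exponent_sum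
    (𝕂 : Type*) [RCLike 𝕂] (m : ℕ) (hm : 2 ≤ m)
    (p : Fin m → ℝ) (hp : ∀ i, 1 < p i)
    [∀ i, Fact (1 ≤ ENNReal.ofReal (p i))]
    (hsum : 1 ≤ ∑ i, 1 / p i)
    (i₀ : ℕ) (hi₀ : 2 ≤ i₀) (hi₀' : i₀ ≤ m)
    (h1 : 1 ≤ ∑ l ∈ Finset.univ.filter (fun l : Fin m => i₀ - 2 ≤ (l : ℕ)), 1 / p l)
    (h2 : ∑ l ∈ Finset.univ.filter (fun l : Fin m => i₀ - 1 ≤ (l : ℕ)), 1 / p l < 1)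
    (A : ContinuousMultilinearMap 𝕂
      (fun i : Fin m => lp (fun _ : ℕ => 𝕂) (ENNReal.ofReal (p i))) 𝕂)
    (hA : ∀ j : Fin m → ℕ, ∃ r : ℝ, 0 ≤ r ∧
      A (fun i => lp.single (ENNReal.ofReal (p i)) (j i) 1) = (r : 𝕂)) :
    ⨆ t : Fin (i₀ - 1) → ℕ,
      mixedNorm
        (fun s : Fin (m - (i₀ - 1)) =>
          1 / (1 - ∑ l ∈ Finset.univ.filter
                (fun l : Fin m => (i₀ - 1) + (s : ℕ) ≤ (l : ℕ)), 1 / p l))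
        (fun s : Fin (m - (i₀ - 1)) → ℕ =>
          ENNReal.ofReal (RCLike.re
            (A (fun i => lp.single (ENNReal.ofReal (p i))
              (if h : (i : ℕ) < i₀ - 1 then t ⟨i, h⟩
                else s ⟨(i : ℕ) - (i₀ - 1), by have := i.isLt; omega⟩) 1))))
      ≤ ENNReal.ofReal ‖A‖ := by
  have hA_re (j : Fin m → ℕ) : 0 ≤ RCLike.re (formCoeff A j) := by
    obtain ⟨r, hr, hAr⟩ := hA j
    rwa [formCoeff, hAr, RCLike.ofReal_re]
  exact mixed_inequality_large_exponent_sum_general (M := i₀ - 1) (by omega) h2 A hA_re
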